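/- Let {W₁^s}_{s∈S₁} and {W₂^t}_{t∈S₂} be two finite families of mutually orthogonal projections on a finite-dimensional complex Hilbert space, with W₁ = Σ_s W₁^s and W₂ = Σ_t W₂^t, and let σ be a density operator. Define F₁ = (Tr[W₁σ] + Tr[W₂σ])/2 and F₂ = (1/2)Σ_{s,t}(Tr[W₂^t W₁^s σ W₁^s] + Tr[W₁^s W₂^t σ W₂^t]). If F₁ > 1/2, then F₂ ≥ (2/max(|S₁|,|S₂|))·(F₁ − 1/2)². -/

import Mathlib

open Matrix BigOperators ComplexOrder

/-!
Write `E X = Re Tr (X σ)`, a positive real-linear functional with `E 1 = 1`, and `P = W₁`, `Q = W₂`,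
which are projections. Summing over the second outcome, the first half of `2 F₂` is
`∑ s, E (W₁ˢ Q W₁ˢ)`, and by Cauchy–Schwarz (`functional_sum_le`) this is at least
`E (P Q P) / |S₁|`; the other half is treated symmetrically.

It remains to see `E (P Q P + Q P Q) ≥ m²` for `m = E (P + Q - 1) = 2 F₁ - 1 > 0`
(`sq_le_functional_pqp`). With `A = P + Q - 1` one has `P Q P + Q P Q = A² (1 + A)`. The function
`a ↦ a² (1 + a)` lies above a line through `(m, m² + m³)` up to multiples of `(a - m)²` and
`(1 + a) (a - m)²`; the corresponding operators `(A - m)²` and `(A - m) (P + Q) (A - m)` are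
positive, which gives the bound `m² + m³`.
-/

section Functional

variable {A : Type*} [Ring A] [StarRing A] [Algebra ℝ A] [StarModule ℝ A]

/-- Cauchy–Schwarz for a sum of elements, with respect to a positive functional. -/
lemma functional_sum_le {S : Type*} [Fintype S] [Nonempty S] (E : A →ₗ[ℝ] ℝ)
    (hE : ∀ b, 0 ≤ E (star b * b)) (b : S → A) :
    E (star (∑ s, b s) * ∑ s, b s) ≤ Fintype.card S * ∑ s, E (star (b s) * b s) := by
  set k : ℝ := (Fintype.card S : ℝ) with hk
  have hk0 : 0 < k := by rw [hk]; exact_mod_cast Fintype.card_pos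
  set T := ∑ s, b s with hT
  -- The variance of `b` around its mean `T / k` is nonnegative, scaled here by `k`.
  have h : 0 ≤ ∑ s, E (star (k • b s - T) * (k • b s - T)) :=
    Finset.sum_nonneg fun s _ => hE _
  have h1 : ∀ s, E (star (k • b s - T) * (k • b s - T)) =
      k ^ 2 * E (star (b s) * b s) - k * E (star (b s) * T) - k * E (star T * b s)
        + E (star T * T) := by
    intro s
    simp only [star_sub, star_smul, star_trivial, sub_mul, mul_sub, smul_mul_assoc,
      mul_smul_comm, map_sub, map_smul, smul_eq_mul]
    ring
  have h2 : ∑ s, E (star (b s) * T) = E (star T * T) := by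
    rw [← map_sum, ← Finset.sum_mul, ← star_sum]
  have h3 : ∑ s, E (star T * b s) = E (star T * T) := by
    rw [← map_sum, ← Finset.mul_sum]
  simp only [h1, Finset.sum_add_distrib, Finset.sum_sub_distrib, ← Finset.mul_sum, h2, h3,
    Finset.sum_const, Finset.card_univ, nsmul_eq_mul, ← hk] at h
  have h4 : 0 ≤ k * (k * ∑ s, E (star (b s) * b s) - E (star T * T)) := by linarith
  linarith [nonneg_of_mul_nonneg_right h4 hk0]

/-- For two projections `P`, `Q` and a state `E` with `m = E (P + Q - 1) ≥ 0`, one has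
`m² ≤ E (P Q P + Q P Q)`. -/
lemma sq_le_functional_pqp (E : A →ₗ[ℝ] ℝ) (hE : ∀ b, 0 ≤ E (star b * b)) (hE1 : E 1 = 1)
    {P Q : A} (hP : star P = P) (hQ : star Q = Q) (hPP : P * P = P) (hQQ : Q * Q = Q)
    (hm : 0 ≤ E P + E Q - 1) :
    (E P + E Q - 1) ^ 2 ≤ E (P * Q * P) + E (Q * P * Q) := by
  set m := E P + E Q - 1 with hmdef
  have hPP' : ∀ x, P * (P * x) = P * x := fun x => by rw [← mul_assoc, hPP]
  have hQQ' : ∀ x, Q * (Q * x) = Q * x := fun x => by rw [← mul_assoc, hQQ]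
  -- With `D = P + Q - 1 - m`, the next three facts are positivity of `(P D)* (P D)`,
  -- `(Q D)* (Q D)` and `D* D`, as `P D = P Q - m P` and `Q D = Q P - m Q`.
  have h1 := hE (P * Q - m • P)
  have h2 := hE (Q * P - m • Q)
  have h3 := hE (P + Q - 1 - m • 1)
  simp only [star_sub, star_add, star_one, star_mul, star_smul, star_trivial, hP, hQ, sub_mul,
    mul_sub, add_mul, mul_add, smul_mul_assoc, mul_smul_comm, mul_one, one_mul, mul_assoc, hPP,
    hQQ, hPP', hQQ', map_sub, map_add, map_smul, smul_eq_mul, hE1] at h1 h2 h3 ⊢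
  have hz : m + m ^ 2 ≤ E (P * Q) + E (Q * P) := by nlinarith
  have hmz := mul_le_mul_of_nonneg_left hz hm
  have hm3 : 0 ≤ m ^ 3 := by positivity
  have hs : m ^ 2 * (E P + E Q) = m ^ 3 + m ^ 2 := by
    rw [show E P + E Q = m + 1 by rw [hmdef]; ring]; ring
  nlinarith

end Functional

/-- A sum of mutually orthogonal projections is idempotent. -/
lemma sum_orth_mul_self {R S : Type*} [Ring R] [Fintype S] [DecidableEq S] (f : S → R)
    (hf : ∀ s s', f s * f s' = if s = s' then f s else 0) :
    (∑ s, f s) * ∑ s, f s = ∑ s, f s := by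
  simp [Finset.sum_mul, Finset.mul_sum, hf]

/-- The real-linear functional `X ↦ Re Tr (X σ)`. -/
noncomputable def reTraceMul {n : Type*} [Fintype n] (σ : Matrix n n ℂ) :
    Matrix n n ℂ →ₗ[ℝ] ℝ where
  toFun X := ((X * σ).trace).re
  map_add' X Y := by simp [add_mul]
  map_smul' r X := by simp

lemma reTraceMul_apply {n : Type*} [Fintype n] (σ X : Matrix n n ℂ) :
    reTraceMul σ X = ((X * σ).trace).re := rfl

lemma reTraceMul_nonneg {n : Type*} [Fintype n] {σ : Matrix n n ℂ}
    (hσ : σ.PosSemidef) (B : Matrix n n ℂ) : 0 ≤ reTraceMul σ (star B * B) := by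
  have h := (hσ.mul_mul_conjTranspose_same B).trace_nonneg
  rw [reTraceMul_apply, mul_assoc, Matrix.trace_mul_comm, star_eq_conjTranspose]
  exact (Complex.le_def.1 h).1

/-- Measuring `f` and then `g`: the total success probability, times the number of outcomes of `f`,
dominates `Re Tr (F G F σ)`, where `F = ∑ f` and `G = ∑ g`. -/
lemma consecutive_bound {n S T : Type*} [Fintype n] [DecidableEq n] [Fintype S]
    [Nonempty S] [Fintype T] [DecidableEq T]
    (f : S → Matrix n n ℂ) (g : T → Matrix n n ℂ)
    (hf : ∀ s, (f s).IsHermitian) (hg : ∀ t, (g t).IsHermitian)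
    (hgo : ∀ t t', g t * g t' = if t = t' then g t else 0)
    {σ : Matrix n n ℂ} (hσ : σ.PosSemidef) :
    0 ≤ ∑ s, ∑ t, ((g t * f s * σ * f s).trace).re ∧
    reTraceMul σ ((∑ s, f s) * (∑ t, g t) * ∑ s, f s) ≤
      Fintype.card S * ∑ s, ∑ t, ((g t * f s * σ * f s).trace).re := by
  set G := ∑ t, g t with hG
  have hGs : star G = G := by
    rw [hG, star_sum]; exact Finset.sum_congr rfl fun t _ => hg t
  have hGG : G * G = G := sum_orth_mul_self g hgo
  have hfs : ∀ s, star (f s) = f s := hf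
  have key : ∀ X Y : Matrix n n ℂ, star (G * X) * (G * Y) = star X * G * Y := fun X Y => by
    rw [star_mul, hGs, mul_assoc, ← mul_assoc G, hGG, mul_assoc]
  have h1 : ∀ s, ∑ t, ((g t * f s * σ * f s).trace).re =
      reTraceMul σ (star (G * f s) * (G * f s)) := by
    intro s
    rw [key, hfs, hG, Finset.mul_sum, Finset.sum_mul, map_sum]
    refine Finset.sum_congr rfl fun t _ => ?_
    rw [reTraceMul_apply, Matrix.trace_mul_comm]
    simp only [mul_assoc]
  simp only [h1]
  refine ⟨Finset.sum_nonneg fun s _ => reTraceMul_nonneg hσ _, ?_⟩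
  have h2 := functional_sum_le (reTraceMul σ) (reTraceMul_nonneg hσ) fun s => G * f s
  rw [← Finset.mul_sum, key, star_sum] at h2
  simpa only [hfs] using h2


open Matrix BigOperators ComplexOrder

theorem two_consecutive_measurements
    {n : Type*} [Fintype n] [DecidableEq n]
    {S₁ S₂ : Type*} [Fintype S₁] [DecidableEq S₁] [Fintype S₂] [DecidableEq S₂]
    [Nonempty S₁] [Nonempty S₂]
    (W₁f : S₁ → Matrix n n ℂ) (W₂f : S₂ → Matrix n n ℂ)
    (hW₁herm : ∀ s, (W₁f s).IsHermitian) (hW₂herm : ∀ t, (W₂f t).IsHermitian)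
    (hW₁orth : ∀ s s', W₁f s * W₁f s' = if s = s' then W₁f s else 0)
    (hW₂orth : ∀ t t', W₂f t * W₂f t' = if t = t' then W₂f t else 0)
    (σ : Matrix n n ℂ) (hσ : σ.PosSemidef) (hσtr : σ.trace = 1)
    (W₁ W₂ : Matrix n n ℂ)
    (hW₁ : W₁ = ∑ s, W₁f s) (hW₂ : W₂ = ∑ t, W₂f t)
    (F₁ F₂ : ℝ)
    (hF₁ : F₁ = (((W₁ * σ).trace).re + ((W₂ * σ).trace).re) / 2)
    (hF₂ : F₂ = (1 / 2) * ∑ s, ∑ t,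
      (((W₂f t * W₁f s * σ * W₁f s).trace).re + ((W₁f s * W₂f t * σ * W₂f t).trace).re))
    (hF₁half : F₁ > 1 / 2) :
    F₂ ≥ (2 / (max (Fintype.card S₁) (Fintype.card S₂) : ℝ)) * (F₁ - 1 / 2) ^ 2 := by
  have hW₁s : star W₁ = W₁ := by
    rw [hW₁, star_sum]; exact Finset.sum_congr rfl fun s _ => hW₁herm s
  have hW₂s : star W₂ = W₂ := by
    rw [hW₂, star_sum]; exact Finset.sum_congr rfl fun t _ => hW₂herm t
  have hW₁i : W₁ * W₁ = W₁ := by rw [hW₁]; exact sum_orth_mul_self _ hW₁orth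
  have hW₂i : W₂ * W₂ = W₂ := by rw [hW₂]; exact sum_orth_mul_self _ hW₂orth
  obtain ⟨hX0, hX⟩ := consecutive_bound W₁f W₂f hW₁herm hW₂herm hW₂orth hσ
  obtain ⟨hY0, hY⟩ := consecutive_bound W₂f W₁f hW₂herm hW₁herm hW₁orth hσ
  rw [← hW₁, ← hW₂] at hX hY
  rw [← reTraceMul_apply, ← reTraceMul_apply] at hF₁
  have hE1 : reTraceMul σ 1 = 1 := by simp [reTraceMul_apply, hσtr]
  have hmain := sq_le_functional_pqp (reTraceMul σ) (reTraceMul_nonneg hσ) hE1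
    hW₁s hW₂s hW₁i hW₂i (by linarith)
  rw [show reTraceMul σ W₁ + reTraceMul σ W₂ - 1 = 2 * (F₁ - 1 / 2) by rw [hF₁]; ring] at hmain
  simp only [Finset.sum_add_distrib] at hF₂
  rw [Finset.sum_comm (f := fun s t => ((W₁f s * W₂f t * σ * W₂f t).trace).re)] at hF₂
  set X := ∑ s, ∑ t, ((W₂f t * W₁f s * σ * W₁f s).trace).re
  set Y := ∑ t, ∑ s, ((W₁f s * W₂f t * σ * W₂f t).trace).re
  set K : ℝ := max (Fintype.card S₁) (Fintype.card S₂)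
  have hK1 : (Fintype.card S₁ : ℝ) ≤ K := le_max_left _ _
  have hK2 : (Fintype.card S₂ : ℝ) ≤ K := le_max_right _ _
  have hK : 0 < K := lt_of_lt_of_le (by exact_mod_cast Fintype.card_pos) hK1
  have h1 := mul_le_mul_of_nonneg_right hK1 hX0
  have h2 := mul_le_mul_of_nonneg_right hK2 hY0
  rw [ge_iff_le, div_mul_eq_mul_div, div_le_iff₀ hK, hF₂]
  linarith
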